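/- arXiv:2407.05223 — 8 statements merged into one kernel-verified Lean document; each statement's English description precedes it below -/
import Mathlib

section
/- Let (X,d) be a nonempty compact metric space. A functional μ : C(X,ℝ) → ℝ satisfying μ(c + f) = c + μ(f) for all constants c and μ(max(f,g)) = max(μ(f), μ(g)) for all f,g (a Maslov/idempotent measure) admits a density: there exists an upper semicontinuous function λ : X → ℝ ∪ {−∞} (with values in EReal, avoiding +∞) that is not identically −∞, such that for every ψ ∈ C(X,ℝ), μ(ψ) = sup_{x∈X} (λ(x) + ψ(x)). This λ is unique among upper semicontinuous functions X → ℝ ∪ {−∞} with nonempty support. Moreover μ(0) = 0 if and only if sup_{x∈X} λ(x) = 0. -/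
theorem maslov_measure_density
    {X : Type*} [MetricSpace X] [CompactSpace X] [Nonempty X]
    (μ : C(X, ℝ) → ℝ)
    (h1 : ∀ (c : ℝ) (f : C(X, ℝ)), μ (ContinuousMap.const X c + f) = c + μ f)
    (h2 : ∀ f g : C(X, ℝ), μ (f ⊔ g) = max (μ f) (μ g)) :
    ∃ lam : X → EReal,
      (UpperSemicontinuous lam ∧ (∀ x, lam x ≠ ⊤) ∧ (∃ x, lam x ≠ ⊥) ∧
        (∀ ψ : C(X, ℝ), (μ ψ : EReal) = ⨆ x : X, lam x + (ψ x : EReal))) ∧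
      (μ 0 = 0 ↔ (⨆ x : X, lam x) = 0) ∧
      (∀ lam' : X → EReal,
        UpperSemicontinuous lam' → (∀ x, lam' x ≠ ⊤) → (∃ x, lam' x ≠ ⊥) →
        (∀ ψ : C(X, ℝ), (μ ψ : EReal) = ⨆ x : X, lam' x + (ψ x : EReal)) →
        lam' = lam) := by
  have mono : ∀ f g : C(X, ℝ), f ≤ g → μ f ≤ μ g := by
    intro f g h
    have := h2 f g
    rw [sup_eq_right.2 h] at this
    rw [this]; exact le_max_left _ _
  have addle : ∀ (a : EReal) (b c : ℝ), a + (b : EReal) ≤ (c : EReal) ↔ a ≤ ((c - b : ℝ) : EReal) := by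
    intro a b c
    induction a using EReal.rec with
    | bot => simp
    | coe a => norm_cast; constructor <;> intro h <;> linarith
    | top => rw [EReal.top_add_coe]; simp only [top_le_iff, EReal.coe_ne_top]
  set lam : X → EReal := fun x => ⨅ f : C(X, ℝ), ((μ f - f x : ℝ) : EReal) with hlam
  have husc : UpperSemicontinuous lam := by
    apply upperSemicontinuous_iInf
    intro f
    apply Continuous.upperSemicontinuous
    exact continuous_coe_real_ereal.comp (by fun_prop)
  have hform : ∀ ψ : C(X, ℝ), (μ ψ : EReal) = ⨆ x : X, lam x + (ψ x : EReal) := by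
    intro ψ
    apply le_antisymm
    · by_contra hcon
      rw [not_le] at hcon
      obtain ⟨c, hc1, hc2⟩ := EReal.lt_iff_exists_real_btwn.1 hcon
      have key : ∃ g : C(X, ℝ), μ g ≤ c ∧ ∀ y ∈ (Set.univ : Set X), ψ y ≤ g y := by
        refine isCompact_univ.induction_on
          (p := fun s => ∃ g : C(X, ℝ), μ g ≤ c ∧ ∀ y ∈ s, ψ y ≤ g y) ?_ ?_ ?_ ?_
        · refine ⟨ContinuousMap.const X (c - μ 0) + 0, ?_, by simp⟩
          rw [h1]; linarith
        · rintro s t hst ⟨g, hg, h⟩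
          exact ⟨g, hg, fun y hy => h y (hst hy)⟩
        · rintro s t ⟨g, hg, h⟩ ⟨g', hg', h'⟩
          refine ⟨g ⊔ g', ?_, ?_⟩
          · rw [h2]; exact max_le hg hg'
          · rintro y (hy | hy)
            · exact (h y hy).trans (le_max_left _ _)
            · exact (h' y hy).trans (le_max_right _ _)
        · intro x _
          have hx : ∃ f : C(X, ℝ), μ f - f x < c - ψ x := by
            by_contra hno
            push Not at hno
            have h3 : ((c - ψ x : ℝ) : EReal) ≤ lam x :=
              le_iInf fun f => EReal.coe_le_coe_iff.2 (hno f)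
            have h4 : (c : EReal) ≤ lam x + (ψ x : EReal) := by
              calc (c : EReal) = ((c - ψ x : ℝ) : EReal) + (ψ x : EReal) := by
                    norm_cast; ring
                _ ≤ _ := add_le_add_left h3 _
            exact absurd (h4.trans (le_iSup (fun x => lam x + (ψ x : EReal)) x)) (not_le.2 hc1)
          obtain ⟨f, hf⟩ := hx
          let g : C(X, ℝ) := ContinuousMap.const X (c - μ f) + f
          refine ⟨{y | ψ y < g y}, ?_, g, ?_, fun y hy => le_of_lt hy⟩
          · apply mem_nhdsWithin_of_mem_nhds
            apply (isOpen_lt ψ.continuous g.continuous).mem_nhds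
            simp only [Set.mem_setOf_eq, g, ContinuousMap.add_apply, ContinuousMap.const_apply]
            linarith
          · simp only [g]; rw [h1]; linarith
      obtain ⟨g, hg, hle⟩ := key
      have h5 : μ ψ ≤ μ g := mono _ _ (fun y => hle y trivial)
      have h6 := EReal.coe_lt_coe_iff.1 hc2
      linarith
    · refine iSup_le fun x => (addle _ _ _).2 ?_
      exact iInf_le (fun f : C(X, ℝ) => ((μ f - f x : ℝ) : EReal)) ψ
  refine ⟨lam, ⟨husc, ?_, ?_, hform⟩, ?_, ?_⟩
  · intro x hx
    have : lam x ≤ ((μ 0 - (0 : C(X, ℝ)) x : ℝ) : EReal) :=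
      iInf_le (fun f : C(X, ℝ) => ((μ f - f x : ℝ) : EReal)) 0
    rw [hx, top_le_iff] at this
    exact EReal.coe_ne_top _ this
  · by_contra hno
    push Not at hno
    have := hform 0
    simp only [hno, EReal.bot_add, iSup_const] at this
    exact EReal.coe_ne_bot _ this
  · have := hform 0
    simp only [ContinuousMap.zero_apply, EReal.coe_zero, add_zero] at this
    rw [← this]; norm_cast
  · intro lam' hu _ _ hf
    funext x
    have hle : ∀ (f : C(X, ℝ)) (y : X), lam' y ≤ ((μ f - f y : ℝ) : EReal) := by
      intro f y
      rw [← addle, hf f]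
      exact le_iSup (fun x => lam' x + (f x : EReal)) y
    apply le_antisymm
    · exact le_iInf fun f => hle f x
    · refine EReal.le_of_forall_lt_iff_le.1 fun c hc => ?_
      obtain ⟨δ, hδ, hball⟩ := Metric.eventually_nhds_iff.1 (hu x c hc)
      let K : ℝ := |μ 0 - c| / δ
      let f : C(X, ℝ) := ⟨fun y => -(K * dist y x), by fun_prop⟩
      have hfx : f x = 0 := by simp [f]
      have hK : 0 ≤ K := by positivity
      have hμ : μ f ≤ c := by
        rw [← EReal.coe_le_coe_iff, hf f]
        refine iSup_le fun y => (addle _ _ _).2 ?_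
        by_cases hy : dist y x < δ
        · refine (hball hy).le.trans (EReal.coe_le_coe_iff.2 ?_)
          have : 0 ≤ K * dist y x := by positivity
          change c ≤ c - -(K * dist y x)
          linarith
        · refine (hle 0 y).trans (EReal.coe_le_coe_iff.2 ?_)
          have h7 : K * δ ≤ K * dist y x := mul_le_mul_of_nonneg_left (not_lt.1 hy) hK
          have h8 : K * δ = |μ 0 - c| := div_mul_cancel₀ _ hδ.ne'
          have h9 := le_abs_self (μ 0 - c)
          change μ 0 - 0 ≤ c - -(K * dist y x)
          linarith
      refine (iInf_le (fun f : C(X, ℝ) => ((μ f - f x : ℝ) : EReal)) f).trans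
        (EReal.coe_le_coe_iff.2 ?_)
      rw [hfx]; linarith
end

section
/- Let S be an mpCIFS on a nonempty compact metric space X and let μ be an idempotent probability on X. Then the functional Λ_μ : C(X,ℝ) → ℝ defined by Λ_μ(f) := sup_{j∈ℕ} ( q_j + μ(f ∘ φ_j) ) is well defined (the supremum is finite) and is itself an idempotent probability on X: Λ_μ(0) = 0, Λ_μ(c + f) = c + Λ_μ(f) for every constant c ∈ ℝ, and Λ_μ(max(f,g)) = max(Λ_μ(f), Λ_μ(g)) for all f, g ∈ C(X,ℝ). -/
open scoped NNReal

def IsIdempotentProb {X : Type*} [TopologicalSpace X] (μ : C(X, ℝ) → ℝ) : Prop :=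
  (∀ (c : ℝ) (f : C(X, ℝ)), μ (ContinuousMap.const X c + f) = c + μ f) ∧
  (∀ f g : C(X, ℝ), μ (f ⊔ g) = max (μ f) (μ g)) ∧
  μ 0 = 0

theorem mpCIFS_Lambda_is_idempotent_prob
    {X : Type*} [MetricSpace X] [CompactSpace X] [Nonempty X]
    (γ : ℝ≥0) (hγ0 : 0 < γ) (hγ1 : γ < 1)
    (φ : ℕ → X → X) (hφ : ∀ j, LipschitzWith γ (φ j))
    (q : ℕ → ℝ) (hq : ∀ j, q j ≤ 0) (hqsup : (⨆ j, q j) = 0)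
    (μ : C(X, ℝ) → ℝ) (hμ : IsIdempotentProb μ) :
    (∀ f : C(X, ℝ),
      BddAbove (Set.range fun j : ℕ => q j + μ (f.comp ⟨φ j, (hφ j).continuous⟩))) ∧
    IsIdempotentProb
      (fun f : C(X, ℝ) => ⨆ j : ℕ, (q j + μ (f.comp ⟨φ j, (hφ j).continuous⟩))) := by 
  obtain ⟨h1, h2, h3⟩ := hμ
  have hmono : ∀ f g : C(X, ℝ), f ≤ g → μ f ≤ μ g := by
    intro f g h
    have := h2 f g
    rw [sup_eq_right.mpr h] at this
    rw [this]
    exact le_max_left _ _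
  have hbdd : ∀ f : C(X, ℝ),
      BddAbove (Set.range fun j : ℕ => q j + μ (f.comp ⟨φ j, (hφ j).continuous⟩)) := by
    intro f
    refine ⟨‖f‖, ?_⟩
    rintro _ ⟨j, rfl⟩
    have hle : f.comp ⟨φ j, (hφ j).continuous⟩ ≤ ContinuousMap.const X ‖f‖ + 0 := by
      intro x
      have := (le_abs_self _).trans (f.norm_coe_le_norm (φ j x))
      simpa using this
    have h4 := hmono _ _ hle
    rw [h1, h3] at h4
    have := hq j
    show q j + μ _ ≤ ‖f‖
    linarith
  refine ⟨hbdd, ?_, ?_, ?_⟩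
  · intro c f
    have : ∀ j, q j + μ ((ContinuousMap.const X c + f).comp ⟨φ j, (hφ j).continuous⟩)
        = c + (q j + μ (f.comp ⟨φ j, (hφ j).continuous⟩)) := by
      intro j
      have h5 : (ContinuousMap.const X c + f).comp ⟨φ j, (hφ j).continuous⟩
        = ContinuousMap.const X c + f.comp ⟨φ j, (hφ j).continuous⟩ := by
        ext x; rfl
      rw [h5, h1]; ring
    simp only [this]
    exact (add_ciSup (hbdd f) c).symm
  · intro f g
    have : ∀ j, q j + μ ((f ⊔ g).comp ⟨φ j, (hφ j).continuous⟩)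
        = (q j + μ (f.comp ⟨φ j, (hφ j).continuous⟩)) ⊔
          (q j + μ (g.comp ⟨φ j, (hφ j).continuous⟩)) := by
      intro j
      have h5 : (f ⊔ g).comp ⟨φ j, (hφ j).continuous⟩
        = f.comp ⟨φ j, (hφ j).continuous⟩ ⊔ g.comp ⟨φ j, (hφ j).continuous⟩ := by
        ext x; rfl
      rw [h5, h2]; exact (max_add_add_left _ _ _).symm
    simp only [this]
    exact ciSup_sup_eq (hbdd f) (hbdd g)
  · have : ∀ j, q j + μ ((0 : C(X, ℝ)).comp ⟨φ j, (hφ j).continuous⟩) = q j := by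
      intro j
      have h5 : (0 : C(X, ℝ)).comp ⟨φ j, (hφ j).continuous⟩ = 0 := by
        ext x; rfl
      rw [h5, h3, add_zero]
    simp only [this]
    exact hqsup
end

section
/- Let X be a nonempty compact metric space, φ_1,…,φ_n : X → X continuous maps and q_1,…,q_n ∈ ℝ weights with max_{1≤j≤n} q_j = 0. Let μ be an idempotent probability on X with density λ : X → ℝ ∪ {−∞}, i.e. μ(f) = sup_{x∈X} (λ(x) + f(x)) for all f ∈ C(X,ℝ). Define L(λ) : X → ℝ ∪ {−∞} by L(λ)(x) = sup { q_j + λ(y) : 1 ≤ j ≤ n, y ∈ X, φ_j(y) = x } (with sup over the empty set equal to −∞). Then for every f ∈ C(X,ℝ), max_{1≤j≤n} ( q_j + μ(f ∘ φ_j) ) = sup_{x∈X} ( L(λ)(x) + f(x) ); that is, M(μ) has density L(λ). -/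
theorem markov_operator_density_is_transfer_of_density
    {X : Type*} [MetricSpace X] [CompactSpace X] [Nonempty X]
    (n : ℕ) (φ : Fin (n + 1) → X → X) (hφ : ∀ j, Continuous (φ j))
    (q : Fin (n + 1) → ℝ)
    (hq : Finset.univ.sup' Finset.univ_nonempty q = 0)
    (μ : C(X, ℝ) → ℝ) (hμ : IsIdempotentProb μ)
    (lam : X → EReal)
    (hlam : ∀ f : C(X, ℝ), (μ f : EReal) = ⨆ x : X, lam x + (f x : EReal)) :
    ∀ f : C(X, ℝ),
      ((Finset.univ.sup' Finset.univ_nonempty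
          (fun j => q j + μ (f.comp ⟨φ j, hφ j⟩)) : ℝ) : EReal) =
        ⨆ x : X,
          ((⨆ (j : Fin (n + 1)) (y : X) (_ : φ j y = x), ((q j : EReal) + lam y))
            + (f x : EReal)) := by
  intro f
  have key : ∀ (a b : EReal) (c : ℝ), a + (c : EReal) ≤ b ↔ a ≤ b - (c : EReal) := by
    intro a b c
    exact (EReal.le_sub_iff_add_le (Or.inl (EReal.coe_ne_bot c))
      (Or.inl (EReal.coe_ne_top c))).symm
  apply le_antisymm
  · obtain ⟨j, -, hj⟩ := Finset.exists_mem_eq_sup' (Finset.univ_nonempty)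
      (fun j => q j + μ (f.comp ⟨φ j, hφ j⟩))
    rw [hj, EReal.coe_add, add_comm, key, hlam]
    refine iSup_le fun y => ?_
    rw [← key]
    refine le_trans ?_ (le_iSup _ (φ j y))
    have h : (q j : EReal) + lam y ≤
        ⨆ (i : Fin (n + 1)) (z : X) (_ : φ i z = φ j y), ((q i : EReal) + lam z) :=
      le_iSup_of_le j (le_iSup_of_le y (le_iSup_of_le rfl le_rfl))
    have h2 := add_le_add_left h ((f (φ j y) : ℝ) : EReal)
    refine le_trans (le_of_eq ?_) h2
    simp only [ContinuousMap.comp_apply, ContinuousMap.coe_mk]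
    rw [add_comm (q j : EReal), add_right_comm]
  · refine iSup_le fun x => ?_
    rw [key]
    refine iSup_le fun j => iSup_le fun y => iSup_le fun hy => ?_
    subst hy
    rw [← key]
    have h1 : lam y + (f (φ j y) : EReal) ≤ (μ (f.comp ⟨φ j, hφ j⟩) : EReal) := by
      rw [hlam]
      exact le_iSup (fun x => lam x + ((f.comp ⟨φ j, hφ j⟩) x : EReal)) y
    have h2 : q j + μ (f.comp ⟨φ j, hφ j⟩) ≤ Finset.univ.sup' Finset.univ_nonempty
        (fun j => q j + μ (f.comp ⟨φ j, hφ j⟩)) :=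
      Finset.le_sup' (fun j => q j + μ (f.comp ⟨φ j, hφ j⟩)) (Finset.mem_univ j)
    refine le_trans ?_ (EReal.coe_le_coe_iff.2 h2)
    rw [EReal.coe_add, add_assoc]
    gcongr
end

section
/- Let X be a nonempty compact metric space and β, τ ∈ (0,1). Then d̃_{β,τ}(μ,ν) := Σ_{i∈ℤ} (τ^{|i|} / β^i) · d_{β^i}(μ,ν) defines a metric on the set of idempotent probabilities on X: it is symmetric, satisfies the triangle inequality, and d̃_{β,τ}(μ,ν) = 0 if and only if μ(f) = ν(f) for all f ∈ C(X,ℝ). -/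
/-- The pseudometric `d_a` on idempotent probabilities. -/
noncomputable def dLip {X : Type*} [MetricSpace X] (a : ℝ) (μ ν : C(X, ℝ) → ℝ) : ℝ :=
  sSup { r : ℝ | ∃ g : C(X, ℝ), LipschitzWith (Real.toNNReal a) g ∧ r = |μ g - ν g| }

/-- The metric `d̃_{β,τ}` on idempotent probabilities. -/
noncomputable def dtilde {X : Type*} [MetricSpace X] (β τ : ℝ) (μ ν : C(X, ℝ) → ℝ) : ℝ :=
  ∑' i : ℤ, (τ ^ i.natAbs / β ^ i) * dLip (β ^ i) μ ν

lemma idp_mono {X : Type*} [TopologicalSpace X] {μ : C(X, ℝ) → ℝ} (h : IsIdempotentProb μ)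
    {f g : C(X, ℝ)} (hfg : f ≤ g) : μ f ≤ μ g := by
  have := h.2.1 f g
  rw [sup_eq_right.2 hfg] at this
  rw [this]; exact le_max_left _ _

lemma idp_lip {X : Type*} [TopologicalSpace X] [CompactSpace X] {μ : C(X, ℝ) → ℝ}
    (h : IsIdempotentProb μ) : LipschitzWith 1 μ := by
  apply LipschitzWith.of_le_add
  intro f g
  have h1 : f ≤ ContinuousMap.const X (dist f g) + g := by
    intro x
    have := ContinuousMap.dist_apply_le_dist (f := f) (g := g) x
    rw [Real.dist_eq] at this
    have := le_abs_self (f x - g x)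
    change f x ≤ dist f g + g x
    linarith
  have := idp_mono h h1
  rw [h.1] at this
  linarith

lemma idp_const {X : Type*} [TopologicalSpace X] {μ : C(X, ℝ) → ℝ}
    (h : IsIdempotentProb μ) (c : ℝ) : μ (ContinuousMap.const X c) = c := by
  have := h.1 c 0
  rwa [add_zero, h.2.2, add_zero] at this

section
variable {X : Type*} [MetricSpace X] [CompactSpace X] [Nonempty X]

lemma idp_bound {μ ν : C(X, ℝ) → ℝ}
    (hμ : IsIdempotentProb μ) (hν : IsIdempotentProb ν) {a : ℝ} (ha : 0 < a) (g : C(X, ℝ))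
    (hg : LipschitzWith (Real.toNNReal a) g) :
    |μ g - ν g| ≤ 2 * a * Metric.diam (Set.univ : Set X) := by
  obtain ⟨x⟩ := ‹Nonempty X›
  have hd : dist g (ContinuousMap.const X (g x)) ≤ a * Metric.diam (Set.univ : Set X) := by
    rw [ContinuousMap.dist_le (mul_nonneg ha.le Metric.diam_nonneg)]
    intro y
    have h1 := hg.dist_le_mul y x
    rw [Real.coe_toNNReal _ ha.le] at h1
    have h2 : dist y x ≤ Metric.diam (Set.univ : Set X) :=
      Metric.dist_le_diam_of_mem isCompact_univ.isBounded trivial trivial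
    exact h1.trans (mul_le_mul_of_nonneg_left h2 ha.le)
  have h1 := (idp_lip hμ).dist_le_mul g (ContinuousMap.const X (g x))
  have h2 := (idp_lip hν).dist_le_mul g (ContinuousMap.const X (g x))
  rw [idp_const hμ, Real.dist_eq, NNReal.coe_one, one_mul] at h1
  rw [idp_const hν, Real.dist_eq, NNReal.coe_one, one_mul] at h2
  have h3 := abs_sub_le (μ g) (g x) (ν g)
  rw [abs_sub_comm (g x)] at h3
  linarith

lemma idp_bdd {μ ν : C(X, ℝ) → ℝ}
    (hμ : IsIdempotentProb μ) (hν : IsIdempotentProb ν) {a : ℝ} (ha : 0 < a) :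
    BddAbove { r : ℝ | ∃ g : C(X, ℝ), LipschitzWith (Real.toNNReal a) g ∧ r = |μ g - ν g| } := by
  refine ⟨2 * a * Metric.diam (Set.univ : Set X), ?_⟩
  rintro r ⟨g, hg, rfl⟩
  exact idp_bound hμ hν ha g hg

lemma idp_le_dLip {μ ν : C(X, ℝ) → ℝ}
    (hμ : IsIdempotentProb μ) (hν : IsIdempotentProb ν) {a : ℝ} (ha : 0 < a) (g : C(X, ℝ))
    (hg : LipschitzWith (Real.toNNReal a) g) : |μ g - ν g| ≤ dLip a μ ν :=
  le_csSup (idp_bdd hμ hν ha) ⟨g, hg, rfl⟩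

lemma dLip_le_of {μ ν : C(X, ℝ) → ℝ} {a B : ℝ}
    (h : ∀ g : C(X, ℝ), LipschitzWith (Real.toNNReal a) g → |μ g - ν g| ≤ B) :
    dLip a μ ν ≤ B := by
  apply csSup_le
  · exact ⟨_, ContinuousMap.const X 0, (LipschitzWith.const (0 : ℝ)).weaken zero_le, rfl⟩
  · rintro r ⟨g, hg, rfl⟩
    exact h g hg

lemma dLip_nonneg' {a : ℝ} (μ ν : C(X, ℝ) → ℝ) : 0 ≤ dLip a μ ν := by
  apply Real.sSup_nonneg
  rintro r ⟨g, hg, rfl⟩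
  exact abs_nonneg _

lemma summable_natAbs {τ : ℝ} (h0 : 0 < τ) (h1 : τ < 1) : Summable fun i : ℤ => τ ^ i.natAbs := by
  have := summable_geometric_of_lt_one h0.le h1
  apply Summable.of_nat_of_neg <;> simpa using this

lemma dt_summable {β τ : ℝ} (hβ0 : 0 < β) (hτ0 : 0 < τ) (hτ1 : τ < 1) {μ ν : C(X, ℝ) → ℝ}
    (hμ : IsIdempotentProb μ) (hν : IsIdempotentProb ν) :
    Summable fun i : ℤ => (τ ^ i.natAbs / β ^ i) * dLip (β ^ i) μ ν := by
  refine Summable.of_nonneg_of_le (fun i => ?_) (fun i => ?_)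
    ((summable_natAbs hτ0 hτ1).mul_right (2 * Metric.diam (Set.univ : Set X)))
  · exact mul_nonneg (by positivity) (dLip_nonneg' _ _)
  · have hb : 0 < β ^ i := by positivity
    have := dLip_le_of (fun g hg => idp_bound hμ hν hb g hg)
    calc _ ≤ (τ ^ i.natAbs / β ^ i) * (2 * β ^ i * Metric.diam (Set.univ : Set X)) :=
          mul_le_mul_of_nonneg_left this (by positivity)
      _ = _ := by field_simp

lemma lip_dense {μ ν : C(X, ℝ) → ℝ}
    (hμ : IsIdempotentProb μ) (hν : IsIdempotentProb ν)
    (h : ∀ (K : NNReal) (g : C(X, ℝ)), LipschitzWith K g → μ g = ν g) (f : C(X, ℝ)) :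
    μ f = ν f := by
  have key := ContinuousMap.sublattice_closure_eq_top
    {g : C(X, ℝ) | ∃ K : NNReal, LipschitzWith K g}
    ⟨ContinuousMap.const X 0, 0, LipschitzWith.const (0 : ℝ)⟩
    (by
      rintro f ⟨K, hf⟩ g ⟨L, hg⟩
      exact ⟨_, hf.min hg⟩)
    (by
      rintro f ⟨K, hf⟩ g ⟨L, hg⟩
      exact ⟨_, hf.max hg⟩)
    (by
      intro v x y
      let c : ℝ := (v y - v x) / dist x y
      have hl : LipschitzWith (‖c‖₊ * 1) (fun z => c * dist x z) :=
        (lipschitzWith_smul c).comp (LipschitzWith.dist_right x)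
      refine ⟨⟨fun z => v x + c * dist x z, by fun_prop⟩,
        ⟨_, (LipschitzWith.const (v x)).add hl⟩, ?_, ?_⟩
      · simp
      · by_cases hxy : x = y
        · subst hxy; simp
        · have : dist x y ≠ 0 := dist_ne_zero.2 hxy
          simp only [ContinuousMap.coe_mk, c]
          field_simp
          ring)
  have hc : IsClosed {f : C(X, ℝ) | μ f = ν f} :=
    isClosed_eq (idp_lip hμ).continuous (idp_lip hν).continuous
  have hsub : closure {g : C(X, ℝ) | ∃ K : NNReal, LipschitzWith K g} ⊆ {f | μ f = ν f} :=
    closure_minimal (fun g ⟨K, hg⟩ => h K g hg) hc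
  rw [key] at hsub
  exact hsub trivial

end

theorem dtilde_is_metric
    {X : Type*} [MetricSpace X] [CompactSpace X] [Nonempty X]
    (β τ : ℝ) (hβ0 : 0 < β) (hβ1 : β < 1) (hτ0 : 0 < τ) (hτ1 : τ < 1) :
    (∀ μ ν : C(X, ℝ) → ℝ, IsIdempotentProb μ → IsIdempotentProb ν →
      dtilde β τ μ ν = dtilde β τ ν μ) ∧
    (∀ μ ν ρ : C(X, ℝ) → ℝ, IsIdempotentProb μ → IsIdempotentProb ν → IsIdempotentProb ρ →
      dtilde β τ μ ρ ≤ dtilde β τ μ ν + dtilde β τ ν ρ) ∧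
    (∀ μ ν : C(X, ℝ) → ℝ, IsIdempotentProb μ → IsIdempotentProb ν →
      (dtilde β τ μ ν = 0 ↔ ∀ f : C(X, ℝ), μ f = ν f)) := by
  refine ⟨?_, ?_, ?_⟩
  · intro μ ν _ _
    simp only [dtilde, dLip, abs_sub_comm]
  · intro μ ν ρ hμ hν hρ
    have s1 := dt_summable hβ0 hτ0 hτ1 hμ hν
    have s2 := dt_summable hβ0 hτ0 hτ1 hν hρ
    have s3 := dt_summable hβ0 hτ0 hτ1 hμ hρ
    unfold dtilde
    rw [← s1.tsum_add s2]
    refine s3.tsum_le_tsum (fun i => ?_) (s1.add s2)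
    have hb : 0 < β ^ i := by positivity
    rw [← mul_add]
    refine mul_le_mul_of_nonneg_left (dLip_le_of fun g hg => ?_) (by positivity)
    exact (abs_sub_le _ (ν g) _).trans
      (add_le_add (idp_le_dLip hμ hν hb g hg) (idp_le_dLip hν hρ hb g hg))
  · intro μ ν hμ hν
    constructor
    · intro h0
      unfold dtilde at h0
      have s1 := dt_summable hβ0 hτ0 hτ1 hμ hν
      have hz := (hasSum_zero_iff_of_nonneg
        (fun i : ℤ => mul_nonneg (by positivity : 0 ≤ τ ^ i.natAbs / β ^ i)
          (dLip_nonneg' (a := β ^ i) μ ν))).1 (by have h := s1.hasSum; rwa [h0] at h)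
      apply lip_dense hμ hν
      intro K g hg
      obtain ⟨n, hn⟩ := pow_unbounded_of_one_lt (K : ℝ) ((one_lt_inv₀ hβ0).2 hβ1)
      have hi := congrFun hz (-(n : ℤ))
      have hb : 0 < β ^ (-(n : ℤ)) := by positivity
      have hd : dLip (β ^ (-(n : ℤ))) μ ν = 0 := by
        rcases mul_eq_zero.1 hi with h | h
        · exact absurd h (by positivity)
        · exact h
      have := idp_le_dLip hμ hν hb g (hg.weaken (by
        rw [Real.le_toNNReal_iff_coe_le hb.le]
        rw [zpow_neg, zpow_natCast, ← inv_pow]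
        exact hn.le))
      rw [hd] at this
      exact sub_eq_zero.1 (abs_nonpos_iff.1 this)
    · intro h
      have : μ = ν := funext h
      subst this
      have hd : ∀ a : ℝ, dLip a μ μ = 0 := fun a =>
        le_antisymm (dLip_le_of fun g _ => by simp) (dLip_nonneg' _ _)
      simp [dtilde, hd]
end

section
/- Let X be a nonempty compact metric space, let φ_1,…,φ_n : X → X be maps that are all Lipschitz with constant γ ∈ (0,1), and let q_1,…,q_n ∈ ℝ be weights with max_{1≤j≤n} q_j = 0. Let M be the associated Markov operator on idempotent probabilities, M(μ)(f) = max_{1≤j≤n} ( q_j + μ(f ∘ φ_j) ). Then for every a > 0 and all idempotent probabilities μ, ν on X, d_a( M(μ), M(ν) ) ≤ d_{γ·a}(μ, ν). -/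
theorem IsIdempotentProb.mono_aux {X : Type*} [TopologicalSpace X] {μ : C(X, ℝ) → ℝ}
    (hμ : IsIdempotentProb μ) {f g : C(X, ℝ)} (h : f ≤ g) : μ f ≤ μ g := by
  have h1 := hμ.2.1 f g
  rw [sup_eq_right.mpr h] at h1
  rw [h1]
  exact le_max_left _ _

theorem IsIdempotentProb.const_aux {X : Type*} [TopologicalSpace X] {μ : C(X, ℝ) → ℝ}
    (hμ : IsIdempotentProb μ) (c : ℝ) : μ (ContinuousMap.const X c) = c := by
  have h1 := hμ.1 c 0
  rw [add_zero, hμ.2.2, add_zero] at h1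
  exact h1

theorem IsIdempotentProb.bound_aux {X : Type*} [MetricSpace X] [CompactSpace X]
    {μ : C(X, ℝ) → ℝ} (hμ : IsIdempotentProb μ) (x0 : X) (K : NNReal) (g : C(X, ℝ))
    (hg : LipschitzWith K g) :
    |μ g - g x0| ≤ K * Metric.diam (Set.univ : Set X) := by
  set D := K * Metric.diam (Set.univ : Set X) with hD
  have key : ∀ x, |g x - g x0| ≤ D := fun x => by
    have h1 := hg.dist_le_mul x x0
    rw [Real.dist_eq] at h1
    refine h1.trans (mul_le_mul_of_nonneg_left ?_ K.2)
    exact Metric.dist_le_diam_of_mem isCompact_univ.isBounded (Set.mem_univ _) (Set.mem_univ _)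
  have hu : g ≤ ContinuousMap.const X (g x0 + D) := fun x => by
    have := (abs_le.mp (key x)).2
    change g x ≤ g x0 + D
    linarith
  have hl : ContinuousMap.const X (g x0 - D) ≤ g := fun x => by
    have := (abs_le.mp (key x)).1
    change g x0 - D ≤ g x
    linarith
  have hu' := hμ.mono_aux hu
  have hl' := hμ.mono_aux hl
  rw [hμ.const_aux] at hu' hl'
  rw [abs_le]
  constructor <;> linarith

theorem dLip_le_aux {X : Type*} [MetricSpace X] [CompactSpace X] [Nonempty X]
    {μ ν : C(X, ℝ) → ℝ} (hμ : IsIdempotentProb μ) (hν : IsIdempotentProb ν) (b : ℝ)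
    (g : C(X, ℝ)) (hg : LipschitzWith (Real.toNNReal b) g) :
    |μ g - ν g| ≤ dLip b μ ν := by
  refine le_csSup ?_ ⟨g, hg, rfl⟩
  obtain ⟨x0⟩ := ‹Nonempty X›
  refine ⟨2 * (Real.toNNReal b * Metric.diam (Set.univ : Set X)), ?_⟩
  rintro r ⟨f, hf, rfl⟩
  have h1 := abs_le.mp (hμ.bound_aux x0 _ f hf)
  have h2 := abs_le.mp (hν.bound_aux x0 _ f hf)
  rw [abs_le]
  constructor <;> linarith [h1.1, h1.2, h2.1, h2.2]

theorem sup'_le_aux {ι : Type*} {s : Finset ι} (hs : s.Nonempty) (u v : ι → ℝ) (D : ℝ)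
    (h : ∀ j, |u j - v j| ≤ D) : |s.sup' hs u - s.sup' hs v| ≤ D := by
  have h1 : s.sup' hs u ≤ s.sup' hs v + D := Finset.sup'_le _ _ fun j hj => by
    have := (abs_le.mp (h j)).2
    have := Finset.le_sup' v hj
    linarith
  have h2 : s.sup' hs v ≤ s.sup' hs u + D := Finset.sup'_le _ _ fun j hj => by
    have := (abs_le.mp (h j)).1
    have := Finset.le_sup' u hj
    linarith
  rw [abs_le]
  constructor <;> linarith

theorem markov_operator_dLip_estimate
    {X : Type*} [MetricSpace X] [CompactSpace X] [Nonempty X]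
    (γ : ℝ) (hγ0 : 0 < γ) (hγ1 : γ < 1)
    (n : ℕ) (φ : Fin (n + 1) → X → X) (hφ : ∀ j, LipschitzWith (Real.toNNReal γ) (φ j))
    (q : Fin (n + 1) → ℝ)
    (hq : Finset.univ.sup' Finset.univ_nonempty q = 0)
    (a : ℝ) (ha : 0 < a)
    (μ ν : C(X, ℝ) → ℝ) (hμ : IsIdempotentProb μ) (hν : IsIdempotentProb ν) :
    dLip a
        (fun f : C(X, ℝ) => Finset.univ.sup' Finset.univ_nonempty
          (fun j => q j + μ (f.comp ⟨φ j, (hφ j).continuous⟩)))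
        (fun f : C(X, ℝ) => Finset.univ.sup' Finset.univ_nonempty
          (fun j => q j + ν (f.comp ⟨φ j, (hφ j).continuous⟩))) ≤
      dLip (γ * a) μ ν := by
  refine csSup_le ⟨_, 0, ?_, rfl⟩ ?_
  · exact LipschitzWith.const' 0
  rintro r ⟨g, hg, rfl⟩
  refine sup'_le_aux _ _ _ _ fun j => ?_
  rw [add_sub_add_left_eq_sub]
  refine dLip_le_aux hμ hν _ _ ?_
  rw [mul_comm, Real.toNNReal_mul ha.le]
  exact hg.comp (hφ j)
end

section
/- Let S = (X, (φ_j)_{j∈ℕ}, (q_j)_{j∈ℕ}) be a γ-uniformly contractive mpCIFS on a nonempty compact metric space X. Then there exists a unique idempotent probability ν on X such that M(ν) = ν, where M(μ)(f) = sup_{j∈ℕ} ( q_j + μ(f ∘ φ_j) ); moreover, for any τ ∈ (γ,1) and any initial idempotent probability μ, the iterates M^n(μ) converge to ν with respect to the metric d̃_{γ,τ}. -/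
open Filter Topology

namespace MpCIFS

lemma prob_mono {X : Type*} [TopologicalSpace X] {μ : C(X, ℝ) → ℝ} (h : IsIdempotentProb μ)
    {f g : C(X, ℝ)} (hfg : f ≤ g) : μ f ≤ μ g := by
  have h1 := h.2.1 f g
  rw [sup_eq_right.mpr hfg] at h1
  rw [h1]
  exact le_max_left _ _

lemma prob_const {X : Type*} [TopologicalSpace X] {μ : C(X, ℝ) → ℝ} (h : IsIdempotentProb μ)
    (c : ℝ) : μ (ContinuousMap.const X c) = c := by
  have h1 := h.1 c 0
  rw [add_zero, h.2.2, add_zero] at h1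
  exact h1

lemma prob_le {X : Type*} [TopologicalSpace X] {μ : C(X, ℝ) → ℝ} (h : IsIdempotentProb μ)
    {f : C(X, ℝ)} {B : ℝ} (hf : ∀ x, f x ≤ B) : μ f ≤ B := by
  rw [← prob_const h B]
  exact prob_mono h (fun x => hf x)

lemma le_prob {X : Type*} [TopologicalSpace X] {μ : C(X, ℝ) → ℝ} (h : IsIdempotentProb μ)
    {f : C(X, ℝ)} {B : ℝ} (hf : ∀ x, B ≤ f x) : B ≤ μ f := by
  rw [← prob_const h B]
  exact prob_mono h (fun x => hf x)

lemma exists_ub {X : Type*} [TopologicalSpace X] [CompactSpace X] (f : C(X, ℝ)) :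
    ∃ B, ∀ x, f x ≤ B :=
  ⟨‖f‖, fun x => (le_abs_self _).trans (f.norm_coe_le_norm x)⟩

lemma prob_sub_le {X : Type*} [TopologicalSpace X] [CompactSpace X] [Nonempty X]
    {μ ν : C(X, ℝ) → ℝ} (hμ : IsIdempotentProb μ) (hν : IsIdempotentProb ν)
    {f : C(X, ℝ)} {ε : ℝ} (hf : ∀ x y, |f x - f y| ≤ ε) : |μ f - ν f| ≤ ε := by
  obtain ⟨a, -, ha⟩ := isCompact_univ.exists_isMaxOn Set.univ_nonempty
    (f.continuous.continuousOn (s := Set.univ))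
  obtain ⟨b, -, hb⟩ := isCompact_univ.exists_isMinOn Set.univ_nonempty
    (f.continuous.continuousOn (s := Set.univ))
  have ha' : ∀ x, f x ≤ f a := fun x => ha (Set.mem_univ x)
  have hb' : ∀ x, f b ≤ f x := fun x => hb (Set.mem_univ x)
  have h1 := prob_le hμ ha'
  have h2 := prob_le hν ha'
  have h3 := le_prob hμ hb'
  have h4 := le_prob hν hb'
  have h5 := (abs_le.mp (hf a b)).2
  rw [abs_le]
  constructor <;> linarith

/-- The Markov operator. -/
noncomputable def op {X : Type*} [TopologicalSpace X] (Φ : ℕ → C(X, X)) (q : ℕ → ℝ)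
    (m : C(X, ℝ) → ℝ) (f : C(X, ℝ)) : ℝ := ⨆ j : ℕ, (q j + m (f.comp (Φ j)))

section
variable {X : Type*} [MetricSpace X] [CompactSpace X] [Nonempty X]
  {Φ : ℕ → C(X, X)} {q : ℕ → ℝ}

lemma op_bdd (hq : ∀ j, q j ≤ 0) {μ : C(X, ℝ) → ℝ} (h : IsIdempotentProb μ) (f : C(X, ℝ)) :
    BddAbove (Set.range fun j : ℕ => q j + μ (f.comp (Φ j))) := by
  obtain ⟨B, hB⟩ := exists_ub f
  refine ⟨B, ?_⟩
  rintro _ ⟨j, rfl⟩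
  have h1 : μ (f.comp (Φ j)) ≤ B := prob_le h (fun x => hB _)
  have := hq j
  simp only
  linarith

lemma op_prob (hq : ∀ j, q j ≤ 0) (hqsup : (⨆ j, q j) = 0)
    {μ : C(X, ℝ) → ℝ} (h : IsIdempotentProb μ) : IsIdempotentProb (op Φ q μ) := by
  refine ⟨fun c f => ?_, fun f g => ?_, ?_⟩
  · unfold op
    rw [add_ciSup (op_bdd hq h f)]
    congr 1
    ext j
    have : (ContinuousMap.const X c + f).comp (Φ j) = ContinuousMap.const X c + f.comp (Φ j) := by
      ext x; simp
    rw [this, h.1]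
    ring
  · have key : ∀ j, μ ((f ⊔ g).comp (Φ j)) = max (μ (f.comp (Φ j))) (μ (g.comp (Φ j))) := by
      intro j
      rw [← h.2.1]
      congr 1
    apply le_antisymm
    · apply ciSup_le
      intro j
      rw [key, ← max_add_add_left]
      exact max_le_max (le_ciSup (op_bdd hq h f) j) (le_ciSup (op_bdd hq h g) j)
    · apply max_le <;> apply ciSup_le <;> intro j <;>
        refine le_trans ?_ (le_ciSup (op_bdd hq h (f ⊔ g)) j) <;> simp only [key]
      · gcongr; exact le_max_left _ _
      · gcongr; exact le_max_right _ _
  · unfold op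
    have : ∀ j, μ ((0 : C(X, ℝ)).comp (Φ j)) = 0 := by
      intro j
      rw [ContinuousMap.zero_comp]
      exact h.2.2
    simp only [this, add_zero, hqsup]

lemma op_iter_prob (hq : ∀ j, q j ≤ 0) (hqsup : (⨆ j, q j) = 0)
    {μ : C(X, ℝ) → ℝ} (h : IsIdempotentProb μ) (n : ℕ) :
    IsIdempotentProb ((op Φ q)^[n] μ) := by
  induction n with
  | zero => exact h
  | succ n ih =>
    rw [Function.iterate_succ_apply']
    exact op_prob hq hqsup ih

lemma op_sub_le (hq : ∀ j, q j ≤ 0) {μ ν : C(X, ℝ) → ℝ}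
    (hμ : IsIdempotentProb μ) (hν : IsIdempotentProb ν) {f : C(X, ℝ)} {ε : ℝ}
    (hf : ∀ j, |μ (f.comp (Φ j)) - ν (f.comp (Φ j))| ≤ ε) :
    |op Φ q μ f - op Φ q ν f| ≤ ε := by
  have h1 : op Φ q μ f ≤ op Φ q ν f + ε := by
    apply ciSup_le
    intro j
    have h2 : q j + ν (f.comp (Φ j)) ≤ op Φ q ν f := le_ciSup (op_bdd hq hν f) j
    have h3 := (abs_le.mp (hf j)).2
    linarith
  have h1' : op Φ q ν f ≤ op Φ q μ f + ε := by
    apply ciSup_le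
    intro j
    have h2 : q j + μ (f.comp (Φ j)) ≤ op Φ q μ f := le_ciSup (op_bdd hq hμ f) j
    have h3 := (abs_le.mp (hf j)).1
    linarith
  rw [abs_le]
  constructor <;> linarith

/-- `f` oscillates at most `ε` on scale `γ ^ n * diam X`. -/
def Osc (γ : ℝ) (n : ℕ) (f : C(X, ℝ)) (ε : ℝ) : Prop :=
  ∀ x y, dist x y ≤ γ ^ n * Metric.diam (Set.univ : Set X) → |f x - f y| ≤ ε

lemma dist_le_D (x y : X) : dist x y ≤ Metric.diam (Set.univ : Set X) :=
  Metric.dist_le_diam_of_mem isCompact_univ.isBounded (Set.mem_univ _) (Set.mem_univ _)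

lemma osc_comp {γ : ℝ} (hγ0 : 0 < γ) {ψ : C(X, X)}
    (hψ : ∀ x y, dist (ψ x) (ψ y) ≤ γ * dist x y)
    {n : ℕ} {f : C(X, ℝ)} {ε : ℝ} (h : Osc γ (n + 1) f ε) : Osc γ n (f.comp ψ) ε := by
  intro x y hxy
  apply h
  refine (hψ x y).trans ?_
  rw [pow_succ', mul_assoc]
  gcongr

lemma iter_sub_le {γ : ℝ} (hγ0 : 0 < γ) (hΦ : ∀ j x y, dist (Φ j x) (Φ j y) ≤ γ * dist x y)
    (hq : ∀ j, q j ≤ 0) (hqsup : (⨆ j, q j) = 0) {μ ν : C(X, ℝ) → ℝ}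
    (hμ : IsIdempotentProb μ) (hν : IsIdempotentProb ν) (n : ℕ) :
    ∀ (f : C(X, ℝ)) (ε : ℝ), Osc γ n f ε →
      |(op Φ q)^[n] μ f - (op Φ q)^[n] ν f| ≤ ε := by
  induction n with
  | zero =>
    intro f ε h
    refine prob_sub_le hμ hν (fun x y => h x y ?_)
    rw [pow_zero, one_mul]
    exact dist_le_D x y
  | succ n ih =>
    intro f ε h
    rw [Function.iterate_succ_apply', Function.iterate_succ_apply']
    exact op_sub_le hq (op_iter_prob hq hqsup hμ n) (op_iter_prob hq hqsup hν n)
      (fun j => ih _ _ (osc_comp hγ0 (hΦ j) h))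

lemma osc_eventually {γ : ℝ} (hγ0 : 0 < γ) (hγ1 : γ < 1) (f : C(X, ℝ)) {ε : ℝ} (hε : 0 < ε) :
    ∃ N, ∀ n ≥ N, Osc γ n f ε := by
  have hu := CompactSpace.uniformContinuous_of_continuous f.continuous
  obtain ⟨δ, hδ, H⟩ := Metric.uniformContinuous_iff.mp hu ε hε
  have ht : Tendsto (fun n : ℕ => γ ^ n * Metric.diam (Set.univ : Set X)) atTop (𝓝 0) := by
    simpa using (tendsto_pow_atTop_nhds_zero_of_lt_one hγ0.le hγ1).mul_const
      (Metric.diam (Set.univ : Set X))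
  obtain ⟨N, hN⟩ := eventually_atTop.mp (ht.eventually (gt_mem_nhds hδ))
  refine ⟨N, fun n hn x y hxy => ?_⟩
  have := H (lt_of_le_of_lt hxy (hN n hn))
  rw [Real.dist_eq] at this
  exact this.le

lemma eval_prob (x : X) : IsIdempotentProb (fun f : C(X, ℝ) => f x) :=
  ⟨fun c f => by simp, fun f g => by simp, by simp⟩

lemma exists_limit {γ : ℝ} (hγ0 : 0 < γ) (hγ1 : γ < 1)
    (hΦ : ∀ j x y, dist (Φ j x) (Φ j y) ≤ γ * dist x y)
    (hq : ∀ j, q j ≤ 0) (hqsup : (⨆ j, q j) = 0) :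
    ∃ ν : C(X, ℝ) → ℝ, IsIdempotentProb ν ∧ ∀ μ, IsIdempotentProb μ →
      ∀ n (f : C(X, ℝ)) ε, Osc γ n f ε → |(op Φ q)^[n] μ f - ν f| ≤ ε := by
  obtain ⟨x0⟩ := ‹Nonempty X›
  haveI : Nonempty X := ⟨x0⟩
  set μ0 : C(X, ℝ) → ℝ := fun f => f x0 with hμ0
  have h0 : IsIdempotentProb μ0 := eval_prob x0
  have hit := fun n => op_iter_prob (Φ := Φ) hq hqsup h0 n
  have hc : ∀ f : C(X, ℝ), ∃ l, Tendsto (fun n => (op Φ q)^[n] μ0 f) atTop (𝓝 l) := by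
    intro f
    apply cauchySeq_tendsto_of_complete
    rw [Metric.cauchySeq_iff']
    intro ε hε
    obtain ⟨N, hN⟩ := osc_eventually hγ0 hγ1 f (half_pos hε)
    refine ⟨N, fun n hn => ?_⟩
    obtain ⟨k, rfl⟩ := Nat.exists_eq_add_of_le hn
    rw [Function.iterate_add_apply, Real.dist_eq]
    have := iter_sub_le hγ0 hΦ hq hqsup (hit k) h0 N f _ (hN N le_rfl)
    linarith
  choose ν hν using hc
  refine ⟨ν, ⟨fun c f => ?_, fun f g => ?_, ?_⟩, ?_⟩
  · refine tendsto_nhds_unique (hν _) ?_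
    simp only [(hit _).1]
    exact (hν f).const_add c
  · refine tendsto_nhds_unique (hν _) ?_
    simp only [(hit _).2.1]
    exact (hν f).max (hν g)
  · refine tendsto_nhds_unique (hν _) ?_
    simp only [(hit _).2.2]
    exact tendsto_const_nhds
  · intro μ hμ n f ε h
    have ht : Tendsto (fun k => |(op Φ q)^[n] μ f - (op Φ q)^[k + n] μ0 f|) atTop
        (𝓝 |(op Φ q)^[n] μ f - ν f|) :=
      (((tendsto_add_atTop_iff_nat n).mpr (hν f)).const_sub _).abs
    refine le_of_tendsto' ht (fun k => ?_)
    rw [add_comm, Function.iterate_add_apply]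
    exact iter_sub_le hγ0 hΦ hq hqsup hμ (hit k) n f ε h

lemma limit_fixed {γ : ℝ} (hγ0 : 0 < γ) (hγ1 : γ < 1)
    (hΦ : ∀ j x y, dist (Φ j x) (Φ j y) ≤ γ * dist x y)
    (hq : ∀ j, q j ≤ 0) (hqsup : (⨆ j, q j) = 0)
    {ν : C(X, ℝ) → ℝ} (hν : IsIdempotentProb ν) (H : ∀ μ, IsIdempotentProb μ →
      ∀ n (f : C(X, ℝ)) ε, Osc γ n f ε → |(op Φ q)^[n] μ f - ν f| ≤ ε) : op Φ q ν = ν := by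
  funext f
  refine eq_of_forall_dist_le (fun ε hε => ?_)
  obtain ⟨N, hN⟩ := osc_eventually hγ0 hγ1 f (half_pos hε)
  have h1 := H ν hν (N + 1) f _ (hN _ (Nat.le_succ N))
  have h2 : |op Φ q ((op Φ q)^[N] ν) f - op Φ q ν f| ≤ ε / 2 :=
    op_sub_le hq (op_iter_prob hq hqsup hν N) hν
      (fun j => H ν hν N _ _ (osc_comp hγ0 (hΦ j) (hN _ (Nat.le_succ N))))
  rw [Function.iterate_succ_apply'] at h1
  rw [Real.dist_eq]
  rw [abs_le] at *
  constructor <;> linarith [h1.1, h1.2, h2.1, h2.2]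

lemma limit_unique {γ : ℝ} (hγ0 : 0 < γ) (hγ1 : γ < 1)
    {ν : C(X, ℝ) → ℝ} (H : ∀ μ, IsIdempotentProb μ →
      ∀ n (f : C(X, ℝ)) ε, Osc γ n f ε → |(op Φ q)^[n] μ f - ν f| ≤ ε)
    {ν' : C(X, ℝ) → ℝ} (hν' : IsIdempotentProb ν') (hfix : op Φ q ν' = ν') : ν' = ν := by
  funext f
  refine eq_of_forall_dist_le (fun ε hε => ?_)
  obtain ⟨N, hN⟩ := osc_eventually hγ0 hγ1 f hε
  have h1 := H ν' hν' N f _ (hN _ le_rfl)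
  rwa [Function.iterate_fixed hfix] at h1

lemma limit_dtilde {γ : ℝ} (hγ0 : 0 < γ) (hγ1 : γ < 1)
    {ν : C(X, ℝ) → ℝ} (H : ∀ μ, IsIdempotentProb μ →
      ∀ n (f : C(X, ℝ)) ε, Osc γ n f ε → |(op Φ q)^[n] μ f - ν f| ≤ ε)
    {τ : ℝ} (hτ0 : 0 < τ) (hτ1 : τ < 1) {μ : C(X, ℝ) → ℝ} (hμ : IsIdempotentProb μ) :
    Tendsto (fun n : ℕ => dtilde γ τ ((op Φ q)^[n] μ) ν) atTop (𝓝 0) := by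
  set D := Metric.diam (Set.univ : Set X) with hD
  have hD0 : 0 ≤ D := Metric.diam_nonneg
  have hd0 : ∀ n (i : ℤ), 0 ≤ dLip (γ ^ i) ((op Φ q)^[n] μ) ν := by
    intro n i
    apply Real.sSup_nonneg
    rintro _ ⟨g, -, rfl⟩
    exact abs_nonneg _
  have hd : ∀ n (i : ℤ), dLip (γ ^ i) ((op Φ q)^[n] μ) ν ≤ γ ^ i * (γ ^ n * D) := by
    intro n i
    have hi : 0 < γ ^ i := zpow_pos hγ0 i
    apply Real.sSup_le
    · rintro _ ⟨g, hg, rfl⟩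
      apply H μ hμ
      intro x y hxy
      have h1 := hg.dist_le_mul x y
      rw [Real.dist_eq, Real.coe_toNNReal _ hi.le] at h1
      refine h1.trans ?_
      gcongr
    · positivity
  have hs : Summable (fun i : ℤ => τ ^ i.natAbs) := by
    apply Summable.of_nat_of_neg <;> simpa using summable_geometric_of_lt_one hτ0.le hτ1
  have h0 : ∀ n (i : ℤ), 0 ≤ (τ ^ i.natAbs / γ ^ i) * dLip (γ ^ i) ((op Φ q)^[n] μ) ν := by
    intro n i
    have hi : 0 < γ ^ i := zpow_pos hγ0 i
    exact mul_nonneg (by positivity) (hd0 n i)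
  have h1 : ∀ n (i : ℤ), (τ ^ i.natAbs / γ ^ i) * dLip (γ ^ i) ((op Φ q)^[n] μ) ν
      ≤ τ ^ i.natAbs * (γ ^ n * D) := by
    intro n i
    have hi : 0 < γ ^ i := zpow_pos hγ0 i
    calc _ ≤ (τ ^ i.natAbs / γ ^ i) * (γ ^ i * (γ ^ n * D)) :=
          mul_le_mul_of_nonneg_left (hd n i) (by positivity)
      _ = _ := by field_simp
  have ht : Tendsto (fun n : ℕ => (∑' i : ℤ, τ ^ i.natAbs) * (γ ^ n * D)) atTop (𝓝 0) := by
    simpa using ((tendsto_pow_atTop_nhds_zero_of_lt_one hγ0.le hγ1).mul_const D).const_mul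
      (∑' i : ℤ, τ ^ i.natAbs)
  refine squeeze_zero (fun n => tsum_nonneg (h0 n)) (fun n => ?_) ht
  have hs' := hs.mul_right (γ ^ n * D)
  rw [← tsum_mul_right]
  exact (Summable.of_nonneg_of_le (h0 n) (h1 n) hs').tsum_le_tsum (h1 n) hs'

end

end MpCIFS

theorem mpCIFS_unique_invariant_idempotent_prob
    {X : Type*} [MetricSpace X] [CompactSpace X] [Nonempty X]
    (γ : ℝ) (hγ0 : 0 < γ) (hγ1 : γ < 1)
    (φ : ℕ → X → X) (hφ : ∀ j, LipschitzWith (Real.toNNReal γ) (φ j))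
    (q : ℕ → ℝ) (hq : ∀ j, q j ≤ 0) (hqsup : (⨆ j, q j) = 0) :
    ∃ ν : C(X, ℝ) → ℝ, IsIdempotentProb ν ∧
      (fun f : C(X, ℝ) => ⨆ j : ℕ, (q j + ν (f.comp ⟨φ j, (hφ j).continuous⟩))) = ν ∧
      (∀ ν' : C(X, ℝ) → ℝ, IsIdempotentProb ν' →
        (fun f : C(X, ℝ) => ⨆ j : ℕ, (q j + ν' (f.comp ⟨φ j, (hφ j).continuous⟩))) = ν' →
        ν' = ν) ∧
      (∀ τ : ℝ, γ < τ → τ < 1 → ∀ μ : C(X, ℝ) → ℝ, IsIdempotentProb μ →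
        Tendsto (fun n : ℕ => dtilde γ τ
            ((fun (m : C(X, ℝ) → ℝ) (f : C(X, ℝ)) =>
              ⨆ j : ℕ, (q j + m (f.comp ⟨φ j, (hφ j).continuous⟩)))^[n] μ) ν)
          atTop (𝓝 0)) := by
  have hΦ : ∀ j x y, dist ((⟨φ j, (hφ j).continuous⟩ : C(X, X)) x)
      ((⟨φ j, (hφ j).continuous⟩ : C(X, X)) y) ≤ γ * dist x y := by
    intro j x y
    have h := (hφ j).dist_le_mul x y
    rwa [Real.coe_toNNReal _ hγ0.le] at h
  obtain ⟨ν, hν, H⟩ := MpCIFS.exists_limit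
    (Φ := fun j => (⟨φ j, (hφ j).continuous⟩ : C(X, X))) hγ0 hγ1 hΦ hq hqsup
  refine ⟨ν, hν, MpCIFS.limit_fixed hγ0 hγ1 hΦ hq hqsup hν H, ?_, ?_⟩
  · intro ν' hν' hfix
    exact MpCIFS.limit_unique hγ0 hγ1 H hν' hfix
  · intro τ h1 h2 μ hμ
    exact MpCIFS.limit_dtilde hγ0 hγ1 H (hγ0.trans h1) h2 hμ
end

section
/- Let S = (X, (φ_j)_{j∈ℕ}, (q_j)_{j∈ℕ}) be a γ-uniformly contractive mpCIFS on a nonempty compact metric space X. For each n ≥ 1 set α_n = max_{1≤j≤n} q_j and q̃_j^n = q_j − α_n, and let M_n be the partial normalized Markov operator M_n(μ)(f) = max_{1≤j≤n} ( q̃_j^n + μ(f ∘ φ_j) ). Suppose that for each n, μ_n is an idempotent probability with M_n(μ_n) = μ_n, and that ν is an idempotent probability with M(ν) = ν, where M(μ)(f) = sup_{j∈ℕ} ( q_j + μ(f ∘ φ_j) ). Then μ_n converges to ν pointwise: for every g ∈ C(X,ℝ), μ_n(g) → ν(g) as n → ∞. -/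
open Filter Topology

theorem IsIdempotentProb.le_of_le {X : Type*} [TopologicalSpace X] {μ : C(X, ℝ) → ℝ}
    (h : IsIdempotentProb μ) {f : C(X, ℝ)} {c : ℝ} (hf : ∀ x, f x ≤ c) : μ f ≤ c := by
  have h1 : μ (ContinuousMap.const X c) = c := by
    have := h.1 c 0
    rw [h.2.2] at this
    simpa using this
  have h2 : f ⊔ ContinuousMap.const X c = ContinuousMap.const X c := by
    ext x; simpa using hf x
  have h3 := h.2.1 f (ContinuousMap.const X c)
  rw [h2, h1] at h3
  rw [h3]; exact le_max_left _ _

theorem IsIdempotentProb.ge_of_ge {X : Type*} [TopologicalSpace X] {μ : C(X, ℝ) → ℝ}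
    (h : IsIdempotentProb μ) {f : C(X, ℝ)} {c : ℝ} (hf : ∀ x, c ≤ f x) : c ≤ μ f := by
  have h1 : μ (ContinuousMap.const X c) = c := by
    have := h.1 c 0
    rw [h.2.2] at this
    simpa using this
  have h2 : f ⊔ ContinuousMap.const X c = f := by
    ext x; simpa using hf x
  have h3 := h.2.1 f (ContinuousMap.const X c)
  rw [h2, h1] at h3
  rw [h3]; exact le_max_right _ _

/-- Two idempotent probabilities differ by at most the oscillation. -/
theorem IsIdempotentProb.le_add {X : Type*} [TopologicalSpace X] [Nonempty X]
    {μ ν : C(X, ℝ) → ℝ} (hμ : IsIdempotentProb μ) (hν : IsIdempotentProb ν)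
    {f : C(X, ℝ)} {ε : ℝ} (hf : ∀ x y, f x ≤ f y + ε) : μ f ≤ ν f + ε := by
  have : ∀ y, μ f - ε ≤ f y := fun y => by
    have := hμ.le_of_le (c := f y + ε) (fun x => hf x y)
    linarith
  linarith [hν.ge_of_ge this]

theorem partial_invariant_probs_tendsto_invariant_prob
    {X : Type*} [MetricSpace X] [CompactSpace X] [Nonempty X]
    (γ : ℝ) (hγ0 : 0 < γ) (hγ1 : γ < 1)
    (φ : ℕ → X → X) (hφ : ∀ j, LipschitzWith (Real.toNNReal γ) (φ j))
    (q : ℕ → ℝ) (hq : ∀ j, q j ≤ 0) (hqsup : (⨆ j, q j) = 0)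
    (μseq : ℕ → (C(X, ℝ) → ℝ))
    (hμseq : ∀ n : ℕ, IsIdempotentProb (μseq n) ∧
      (fun f : C(X, ℝ) => ⨆ j : Fin (n + 1),
          (q j - (⨆ j' : Fin (n + 1), q j') + μseq n (f.comp ⟨φ j, (hφ j).continuous⟩)))
        = μseq n)
    (ν : C(X, ℝ) → ℝ)
    (hν : IsIdempotentProb ν ∧
      (fun f : C(X, ℝ) => ⨆ j : ℕ, (q j + ν (f.comp ⟨φ j, (hφ j).continuous⟩))) = ν) :
    ∀ g : C(X, ℝ), Tendsto (fun n : ℕ => μseq n g) atTop (𝓝 (ν g)) := by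
  have hqb : BddAbove (Set.range q) := ⟨0, by rintro _ ⟨j, rfl⟩; exact hq j⟩
  set α : ℕ → ℝ := fun n => ⨆ j' : Fin (n + 1), q j' with hα
  have hα0 : ∀ n, α n ≤ 0 := fun n => ciSup_le fun j => hq j
  have hαge : ∀ n j, j ≤ n → q j ≤ α n := fun n j hj =>
    le_ciSup (f := fun j' : Fin (n + 1) => q j') (Set.finite_range _).bddAbove
      ⟨j, Nat.lt_succ_of_le hj⟩
  have hαlim : Tendsto α atTop (𝓝 0) := by
    rw [tendsto_order]
    refine ⟨fun a ha => ?_, fun a ha => Eventually.of_forall fun n => (hα0 n).trans_lt ha⟩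
    rw [← hqsup] at ha
    obtain ⟨j, hj⟩ := exists_lt_of_lt_ciSup ha
    filter_upwards [eventually_ge_atTop j] with n hn
    exact hj.trans_le (hαge n j hn)
  set Φ : ℕ → C(X, X) := fun j => ⟨φ j, (hφ j).continuous⟩ with hΦ
  have hνeq : ∀ f, ν f = ⨆ j : ℕ, (q j + ν (f.comp (Φ j))) := fun f => (congrFun hν.2 f).symm
  have hμeq : ∀ n f, μseq n f = ⨆ j : Fin (n + 1), (q j - α n + μseq n (f.comp (Φ j))) :=
    fun n f => (congrFun (hμseq n).2 f).symm
  have hνb : ∀ f : C(X, ℝ), BddAbove (Set.range fun j : ℕ => q j + ν (f.comp (Φ j))) := by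
    intro f
    refine ⟨‖f‖, ?_⟩
    rintro _ ⟨j, rfl⟩
    have : ν (f.comp (Φ j)) ≤ ‖f‖ :=
      hν.1.le_of_le fun x => (le_abs_self _).trans (f.norm_coe_le_norm _)
    have := hq j
    show q j + ν (f.comp (Φ j)) ≤ ‖f‖
    linarith
  have hνge : ∀ f j, q j + ν (f.comp (Φ j)) ≤ ν f := fun f j => by
    rw [hνeq f]; exact le_ciSup (hνb f) j
  have hμge : ∀ n f j, j ≤ n → q j - α n + μseq n (f.comp (Φ j)) ≤ μseq n f := fun n f j hj => by
    rw [hμeq n f]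
    exact le_ciSup (f := fun j : Fin (n + 1) => q j - α n + μseq n (f.comp (Φ j)))
      (Set.finite_range _).bddAbove ⟨j, Nat.lt_succ_of_le hj⟩
  obtain ⟨D, hD0, hD⟩ : ∃ D : ℝ, 0 ≤ D ∧ ∀ x y : X, dist x y ≤ D :=
    ⟨Metric.diam (Set.univ : Set X), Metric.diam_nonneg, fun x y =>
      Metric.dist_le_diam_of_mem isCompact_univ.isBounded trivial trivial⟩
  have hstep : ∀ (k : ℕ) (f : C(X, ℝ)) (ε : ℝ),
      (∀ x y, dist x y ≤ γ ^ (k + 1) * D → f x ≤ f y + ε) →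
      ∀ j, ∀ x y, dist x y ≤ γ ^ k * D → (f.comp (Φ j)) x ≤ (f.comp (Φ j)) y + ε := by
    intro k f ε hf j x y hxy
    refine hf _ _ ?_
    have := (hφ j).dist_le_mul x y
    rw [Real.coe_toNNReal _ hγ0.le] at this
    refine this.trans ?_
    rw [pow_succ', mul_assoc]
    exact mul_le_mul_of_nonneg_left hxy hγ0.le
  have upper : ∀ (k : ℕ) (f : C(X, ℝ)) (ε : ℝ),
      (∀ x y, dist x y ≤ γ ^ k * D → f x ≤ f y + ε) →
      ∀ n, μseq n f ≤ ν f - k * α n + ε := by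
    intro k
    induction k with
    | zero =>
      intro f ε hf n
      have := (hμseq n).1.le_add hν.1 (f := f) (ε := ε) (fun x y => hf x y (by simpa using hD x y))
      simpa using this
    | succ k ih =>
      intro f ε hf n
      rw [hμeq n f]
      refine ciSup_le fun j => ?_
      have h1 := ih _ ε (hstep k f ε hf j) n
      have h2 := hνge f j
      push_cast
      linarith
  have lower : ∀ (k : ℕ) (f : C(X, ℝ)) (ε : ℝ),
      (∀ x y, dist x y ≤ γ ^ k * D → f x ≤ f y + ε) →
      ∀ c, c < ν f - ε → ∀ᶠ n in atTop, c < μseq n f := by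
    intro k
    induction k with
    | zero =>
      intro f ε hf c hc
      refine Eventually.of_forall fun n => ?_
      have := hν.1.le_add (hμseq n).1 (f := f) (ε := ε) (fun x y => hf x y (by simpa using hD x y))
      linarith
    | succ k ih =>
      intro f ε hf c hc
      have hc' : c + ε < ⨆ j : ℕ, (q j + ν (f.comp (Φ j))) := by
        rw [← hνeq f]; linarith
      obtain ⟨j, hj⟩ := exists_lt_of_lt_ciSup hc'
      filter_upwards [ih _ ε (hstep k f ε hf j) (c - q j) (by linarith), eventually_ge_atTop j]
        with n hn hjn
      have := hμge n f j hjn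
      have := hα0 n
      linarith
  intro g
  have hosc : ∀ ε > 0, ∃ k : ℕ, ∀ x y, dist x y ≤ γ ^ k * D → g x ≤ g y + ε := by
    intro ε hε
    have huc := CompactSpace.uniformContinuous_of_continuous g.continuous
    obtain ⟨δ, hδ, h⟩ := Metric.uniformContinuous_iff.1 huc ε hε
    have hl : Tendsto (fun k : ℕ => γ ^ k * D) atTop (𝓝 0) := by
      simpa using (tendsto_pow_atTop_nhds_zero_of_lt_one hγ0.le hγ1).mul_const D
    obtain ⟨k, hk⟩ := (hl.eventually_lt_const hδ).exists
    refine ⟨k, fun x y hxy => ?_⟩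
    have := h (hxy.trans_lt hk)
    rw [Real.dist_eq] at this
    linarith [(abs_lt.1 this).2]
  rw [tendsto_order]
  constructor
  · intro a ha
    obtain ⟨k, hk⟩ := hosc ((ν g - a) / 2) (by linarith)
    exact lower k g _ hk a (by linarith)
  · intro a ha
    obtain ⟨k, hk⟩ := hosc ((a - ν g) / 2) (by linarith)
    have hl : Tendsto (fun n => ν g - k * α n + (a - ν g) / 2) atTop
        (𝓝 (ν g - k * 0 + (a - ν g) / 2)) :=
      ((hαlim.const_mul _).const_sub _).add_const _
    filter_upwards [hl.eventually_lt_const (u := a) (by linarith)] with n hn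
    exact (upper k g _ hk n).trans_lt hn
end

section
/- Let X be a nonempty compact metric space. The set I(X) of idempotent probabilities on X, regarded as a subset of the product space ℝ^{C(X,ℝ)} (all functionals C(X,ℝ) → ℝ with the topology of pointwise convergence), is compact. -/
theorem idempotent_probs_isCompact
    {X : Type*} [MetricSpace X] [CompactSpace X] [Nonempty X] :
    IsCompact { μ : C(X, ℝ) → ℝ | IsIdempotentProb μ } := by
  have key : ∀ μ : C(X, ℝ) → ℝ, IsIdempotentProb μ → ∀ f, μ f ∈ Set.Icc (-‖f‖) ‖f‖ := by
    rintro μ ⟨h1, h2, h3⟩ f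
    have mono : ∀ f g : C(X, ℝ), f ≤ g → μ f ≤ μ g := by
      intro f g h
      have h4 := h2 f g
      rw [sup_eq_right.mpr h] at h4
      rw [h4]
      exact le_max_left _ _
    have hc : ∀ c : ℝ, μ (ContinuousMap.const X c) = c := by
      intro c
      have h4 := h1 c 0
      rwa [add_zero, h3, add_zero] at h4
    constructor
    · rw [← hc (-‖f‖)]
      exact mono _ _ fun x => (abs_le.mp (f.norm_coe_le_norm x)).1
    · rw [← hc ‖f‖]
      exact mono _ _ fun x => (abs_le.mp (f.norm_coe_le_norm x)).2
  have hK : IsCompact (Set.univ.pi fun f : C(X, ℝ) => Set.Icc (-‖f‖) ‖f‖) :=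
    isCompact_univ_pi fun f => isCompact_Icc
  refine hK.of_isClosed_subset ?_ fun μ hμ f _ => key μ hμ f
  simp only [IsIdempotentProb, Set.ofPred_and, Set.ofPred_forall]
  refine IsClosed.inter ?_ (IsClosed.inter ?_ ?_)
  · exact isClosed_iInter fun c => isClosed_iInter fun f =>
      isClosed_eq (continuous_apply _) (continuous_const.add (continuous_apply _))
  · exact isClosed_iInter fun f => isClosed_iInter fun g =>
      isClosed_eq (continuous_apply _) ((continuous_apply f).max (continuous_apply g))
  · exact isClosed_eq (continuous_apply _) continuous_const
end
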